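/- Suppose the ε-NFA M' extends the ε-NFA M by bypass ε-edges. Then for every word α accepted by M' there exists a word α' accepted by M such that α' R* α. (This is the paper's Lemma 1, 'no new information is added': any access pattern accepted after adding the bypass ε-edges is a reduced version of some access pattern accepted before.) -/

import Mathlib

/-- The four-element alphabet: selectors `c0`, `c1` and barred symbols `b0, b1`. -/
inductive ASym : Type
  | c0 | c1 | b0 | b1
  deriving DecidableEq

open ASym

/-- One-step cancellation relation on words: `𝟬̄𝟬 → ε` and `𝟭̄𝟭 → ε`. -/
def Cancel (w w' : List ASym) : Prop :=
  ∃ u v : List ASym,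
    (w = u ++ [b0, c0] ++ v ∧ w' = u ++ v) ∨
    (w = u ++ [b1, c1] ++ v ∧ w' = u ++ v)

/-- `(q', q'')` is a bypass pair in `M`. -/
def BypassPair {σ : Type*} (M : εNFA ASym σ) (q' q'' : σ) : Prop :=
  ∃ q : σ,
    (q ∈ M.step q' (some b0) ∧ q'' ∈ M.step q (some c0)) ∨
    (q ∈ M.step q' (some b1) ∧ q'' ∈ M.step q (some c1))

/-- `M'` extends `M` by bypass ε-edges. -/
def ExtendsByBypass {σ : Type*} (M M' : εNFA ASym σ) : Prop :=
  M'.start = M.start ∧ M'.accept = M.accept ∧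
  (∀ q a, M'.step q (some a) = M.step q (some a)) ∧
  (∀ q, M.step q none ⊆ M'.step q none) ∧
  (∀ q' q'', q'' ∈ M'.step q' none → q'' ∉ M.step q' none → BypassPair M q' q'')

/-- The ε-NFA obtained from `M` by adding a single ε-transition from `q'` to `q''`. -/
def addEps {σ : Type*} (M : εNFA ASym σ) (q' q'' : σ) : εNFA ASym σ where
  step := fun q a => M.step q a ∪ {p | q = q' ∧ a = none ∧ p = q''}
  start := M.start
  accept := M.accept

/-- `M` is bypass-closed: adding the ε-edge of any bypass pair does not change the language. -/
def BypassClosed {σ : Type*} (M : εNFA ASym σ) : Prop :=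
  ∀ q' q'', BypassPair M q' q'' → (addEps M q' q'').accepts = M.accepts

/-- The barred-removal of `M`: delete all edges labeled `b0` or `b1`. -/
def barredRemoval {σ : Type*} (M : εNFA ASym σ) : εNFA ASym σ where
  step := fun q a =>
    match a with
    | none => M.step q none
    | some c0 => M.step q (some c0)
    | some c1 => M.step q (some c1)
    | some b0 => ∅
    | some b1 => ∅
  start := M.start
  accept := M.accept

theorem isPath_bypass_reduces {σ : Type*} (M M' : εNFA ASym σ)
    (h : ExtendsByBypass M M') (s t : σ) (x : List (Option ASym)) (hx : M'.IsPath s t x) :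
    ∃ y, M.IsPath s t y ∧ Relation.ReflTransGen Cancel y.reduceOption x.reduceOption := by
  obtain ⟨-, -, hsome, -, hnew⟩ := h
  induction hx with
  | nil s => exact ⟨[], .nil s, .refl⟩
  | cons t s u a x hst _ ih =>
    obtain ⟨y, hy, hr⟩ := ih
    cases a with
    | some a =>
      refine ⟨some a :: y, .cons t s u _ _ (hsome s a ▸ hst) hy, ?_⟩
      rw [List.reduceOption_cons_of_some, List.reduceOption_cons_of_some]
      refine Relation.ReflTransGen.lift (List.cons a) ?_ _ _ hr
      rintro w w' ⟨p, q, ⟨rfl, rfl⟩ | ⟨rfl, rfl⟩⟩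
      · exact ⟨a :: p, q, Or.inl ⟨by simp, by simp⟩⟩
      · exact ⟨a :: p, q, Or.inr ⟨by simp, by simp⟩⟩
    | none =>
      rw [List.reduceOption_cons_of_none]
      by_cases hm : t ∈ M.step s none
      · exact ⟨none :: y, .cons t s u _ _ hm hy, by rwa [List.reduceOption_cons_of_none]⟩
      · obtain ⟨q, ⟨h1, h2⟩ | ⟨h1, h2⟩⟩ := hnew s t hst hm
        · refine ⟨some b0 :: some c0 :: y, .cons q s u _ _ h1 (.cons t q u _ _ h2 hy), ?_⟩
          rw [List.reduceOption_cons_of_some, List.reduceOption_cons_of_some]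
          exact .head ⟨[], y.reduceOption, Or.inl ⟨by simp, by simp⟩⟩ hr
        · refine ⟨some b1 :: some c1 :: y, .cons q s u _ _ h1 (.cons t q u _ _ h2 hy), ?_⟩
          rw [List.reduceOption_cons_of_some, List.reduceOption_cons_of_some]
          exact .head ⟨[], y.reduceOption, Or.inr ⟨by simp, by simp⟩⟩ hr

/-- Lemma 1: adding bypass ε-edges adds no new information. -/
theorem accepts_extendsByBypass_reduces {σ : Type*} (M M' : εNFA ASym σ)
    (h : ExtendsByBypass M M') (α : List ASym) (hα : α ∈ M'.accepts) :
    ∃ α' ∈ M.accepts, Relation.ReflTransGen Cancel α' α := by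
  obtain ⟨s, t, x, hs, ht, rfl, hx⟩ := M'.mem_accepts_iff_exists_path.1 hα
  obtain ⟨y, hy, hr⟩ := isPath_bypass_reduces M M' h s t x hx
  exact ⟨y.reduceOption, M.mem_accepts_iff_exists_path.2
    ⟨s, t, y, h.1 ▸ hs, h.2.1 ▸ ht, rfl, hy⟩, hr⟩
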